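/- arXiv:1105.1084 — 2 statements merged into one kernel-verified Lean document; each statement's English description precedes it below -/
import Mathlib

section
/- Fix m > 0. Suppose τ is a POVM on (ℝ, ℬ(ℝ)) acting on L²(ℝ) such that for all Schwartz functions φ, ψ and all Borel B ⊆ ℝ: ⟨φ, τ(B)ψ⟩ = (1/(2πm)) ∫_B ∫₀^∞ ∫₀^∞ e^{(it/(2m))(p₂² − p₁²)} (conj(φ̂(p₁)) ψ̂(p₂) + conj(φ̂(−p₁)) ψ̂(−p₂)) √(p₁ p₂) dp₁ dp₂ dt, where φ̂ denotes the Fourier–Plancherel transform (the canonical time observable of a free particle of mass m). Then τ is an extreme point of the convex set of ALL POVMs on (ℝ, ℬ(ℝ)) acting on L²(ℝ). -/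
open MeasureTheory Set
open scoped ComplexConjugate SchwartzMap

local notation "⟪" x ", " y "⟫" => @inner ℂ _ _ x y

/-- A normalized positive operator valued measure (POVM). -/
structure POVM (Ω : Type*) [MeasurableSpace Ω] (H : Type*) [NormedAddCommGroup H]
    [InnerProductSpace ℂ H] [CompleteSpace H] where
  toFun : Set Ω → (H →L[ℂ] H)
  isPositive : ∀ B : Set Ω, MeasurableSet B → (toFun B).IsPositive
  normalized : toFun Set.univ = 1
  m_iUnion : ∀ B : ℕ → Set Ω, (∀ k, MeasurableSet (B k)) →
    Pairwise (Function.onFun Disjoint B) → ∀ φ ψ : H,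
      HasSum (fun k => ⟪φ, toFun (B k) ψ⟫) ⟪φ, toFun (⋃ k, B k) ψ⟫

noncomputable section

/-- `L²(ℝ)`. -/
abbrev L2R : Type := Lp ℂ 2 (volume : Measure ℝ)

/-- `ℓ²(ℕ)`. -/
abbrev ell2 : Type := lp (fun _ : ℕ => ℂ) 2

/-- The Fourier(–Plancherel) transform `φ̂(p) = (2π)^{-1/2} ∫ e^{ipx} φ(x) dx`. -/
def fourierT (φ : ℝ → ℂ) (p : ℝ) : ℂ :=
  ((Real.sqrt (2 * Real.pi) : ℝ) : ℂ)⁻¹ * ∫ x : ℝ, Complex.exp (Complex.I * p * x) * φ x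

/-- `V` is (the matrix elements on Schwartz functions of) the free evolution
`V(t) = 𝓕* e^{itp²/(2m)} 𝓕` of a particle of mass `m`. -/
def IsFreeEvolution (m : ℝ) (V : ℝ → (L2R ≃ₗᵢ[ℂ] L2R)) : Prop :=
  ∀ t : ℝ, ∀ φ ψ : 𝓢(ℝ, ℂ),
    ∀ (hφ : MemLp (⇑φ) 2 (volume : Measure ℝ)) (hψ : MemLp (⇑ψ) 2 (volume : Measure ℝ)),
      ⟪hφ.toLp ⇑φ, V t (hψ.toLp ⇑ψ)⟫
        = ∫ p : ℝ, conj (fourierT (⇑φ) p) *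
            Complex.exp (Complex.I * t * p ^ 2 / (2 * m)) * fourierT (⇑ψ) p

/-- Time covariance: `V(t) M(B) V(t)* = M(B + t)`. -/
def TimeCovariant (V : ℝ → (L2R ≃ₗᵢ[ℂ] L2R)) (M : POVM ℝ L2R) : Prop :=
  ∀ t : ℝ, ∀ B : Set ℝ, MeasurableSet B → ∀ φ ψ : L2R,
    ⟪(V t φ : L2R), M.toFun ((fun s => s + t) '' B) (V t ψ)⟫ = ⟪φ, M.toFun B ψ⟫

namespace POVM

variable {H : Type*} [NormedAddCommGroup H] [InnerProductSpace ℂ H] [CompleteSpace H]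

lemma pos_cs (P : H →L[ℂ] H) (hP : P.IsPositive) (x y : H) (ε : ℝ) (hε : 0 < ε) :
    ‖⟪x, P y⟫‖ ≤ ε / 2 * (⟪x, P x⟫).re + 1 / (2 * ε) * (⟪y, P y⟫).re := by
  by_cases hw : ⟪x, P y⟫ = 0
  · rw [hw, norm_zero]
    have h1 := hP.re_inner_nonneg_right x
    have h2 := hP.re_inner_nonneg_right y
    simp only [RCLike.re_to_complex] at h1 h2
    positivity
  set w := ⟪x, P y⟫ with hwd
  have hn : 0 < ‖w‖ := norm_pos_iff.mpr hw
  set z : ℂ := (ε⁻¹ * ‖w‖⁻¹ : ℝ) * conj w with hz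
  have h := hP.re_inner_nonneg_right (x - z • y)
  have hsym : ⟪y, P x⟫ = conj w := by
    rw [hwd, inner_conj_symm]
    exact (hP.isSymmetric y x).symm
  have hzw : z * w = (ε⁻¹ * ‖w‖ : ℝ) := by
    rw [hz, mul_assoc, Complex.conj_mul']
    push_cast
    have : (‖w‖ : ℂ) ≠ 0 := by exact_mod_cast hn.ne'
    field_simp
  have hzz : conj z * z = (ε⁻¹ ^ 2 : ℝ) := by
    rw [Complex.conj_mul', hz]
    simp only [norm_mul, Complex.norm_real, Complex.norm_conj, norm_inv, norm_norm,
      Real.norm_of_nonneg hε.le]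
    rw [mul_assoc, inv_mul_cancel₀ hn.ne', mul_one]
    push_cast; rfl
  have e : ⟪x - z • y, P (x - z • y)⟫ =
      ⟪x, P x⟫ - z * w - conj (z * w) + conj z * z * ⟪y, P y⟫ := by
    simp only [map_sub, map_smul, inner_sub_left, inner_sub_right, inner_smul_left,
      inner_smul_right, hsym, map_mul]
    rw [← hwd]; ring
  rw [e, hzw, hzz, Complex.conj_ofReal] at h
  simp only [RCLike.re_to_complex, Complex.add_re, Complex.sub_re, Complex.ofReal_re,
    Complex.re_ofReal_mul] at h
  have h3 : ε / 2 * (⟪x, P x⟫).re + 1 / (2 * ε) * (⟪y, P y⟫).re - ‖w‖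
      = ε / 2 * ((⟪x, P x⟫).re - ε⁻¹ * ‖w‖ - ε⁻¹ * ‖w‖ + ε⁻¹ ^ 2 * (⟪y, P y⟫).re) := by
    field_simp; ring
  have : 0 ≤ ε / 2 * ((⟪x, P x⟫).re - ε⁻¹ * ‖w‖ - ε⁻¹ * ‖w‖ + ε⁻¹ ^ 2 * (⟪y, P y⟫).re) := by
    positivity
  linarith

variable {Ω : Type*} [MeasurableSpace Ω]

lemma re_nonneg (M : POVM Ω H) (φ : H) {B : Set Ω} (hB : MeasurableSet B) :
    0 ≤ (⟪φ, M.toFun B φ⟫).re := (M.isPositive B hB).re_inner_nonneg_right φ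

lemma inner_eq_re (M : POVM Ω H) (φ : H) {B : Set Ω} (hB : MeasurableSet B) :
    ⟪φ, M.toFun B φ⟫ = ((⟪φ, M.toFun B φ⟫).re : ℂ) := by
  have := (M.isPositive B hB).inner_nonneg_right φ
  have h2 := (Complex.nonneg_iff.mp this).2
  exact Complex.ext (Complex.ofReal_re _).symm (by rw [Complex.ofReal_im]; exact h2.symm)

lemma inner_empty (M : POVM Ω H) (φ ψ : H) : ⟪φ, M.toFun ∅ ψ⟫ = 0 := by
  have := M.m_iUnion (fun _ => ∅) (fun _ => MeasurableSet.empty)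
    (fun i j _ => by simp [Function.onFun]) φ ψ
  exact tendsto_nhds_unique tendsto_const_nhds this.summable.tendsto_atTop_zero

lemma hasSum_re (M : POVM Ω H) (φ : H) (B : ℕ → Set Ω) (hB : ∀ k, MeasurableSet (B k))
    (hd : Pairwise (Function.onFun Disjoint B)) :
    HasSum (fun k => (⟪φ, M.toFun (B k) φ⟫).re) (⟪φ, M.toFun (⋃ k, B k) φ⟫).re :=
  Complex.hasSum_re (M.m_iUnion B hB hd φ φ)

/-- The scalar measure attached to a POVM and a vector. -/
def meas (M : POVM Ω H) (φ : H) : Measure Ω :=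
  Measure.ofMeasurable (fun B _ => ENNReal.ofReal (⟪φ, M.toFun B φ⟫).re)
    (by simp [inner_empty])
    (fun B hB hd => by
      have h := M.hasSum_re φ B hB hd
      rw [← h.tsum_eq, ENNReal.ofReal_tsum_of_nonneg (fun k => M.re_nonneg φ (hB k)) h.summable])

lemma meas_apply (M : POVM Ω H) (φ : H) {B : Set Ω} (hB : MeasurableSet B) :
    M.meas φ B = ENNReal.ofReal (⟪φ, M.toFun B φ⟫).re :=
  Measure.ofMeasurable_apply B hB

instance (M : POVM Ω H) (φ : H) : IsFiniteMeasure (M.meas φ) :=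
  ⟨by rw [meas_apply _ _ MeasurableSet.univ]; exact ENNReal.ofReal_lt_top⟩

lemma meas_real (M : POVM Ω H) (φ : H) {B : Set Ω} (hB : MeasurableSet B) :
    (M.meas φ).real B = (⟪φ, M.toFun B φ⟫).re := by
  rw [Measure.real, meas_apply _ _ hB, ENNReal.toReal_ofReal (M.re_nonneg φ hB)]

lemma norm_exp_sub (a b : ℝ) :
    ‖Complex.exp (Complex.I * a) - Complex.exp (Complex.I * b)‖ ≤ |a - b| := by
  have : Complex.exp (Complex.I * a) - Complex.exp (Complex.I * b)
      = Complex.exp (Complex.I * b) * (Complex.exp (Complex.I * ((a - b : ℝ) : ℂ)) - 1) := by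
    rw [mul_sub, ← Complex.exp_add]; congr 2 <;> (push_cast; ring)
  rw [this, norm_mul, mul_comm Complex.I (b : ℂ), Complex.norm_exp_ofReal_mul_I, one_mul]
  exact Real.norm_exp_I_mul_ofReal_sub_one_le

lemma exists_partition (r ε : ℝ) (hε : 0 < ε) : ∃ (B : ℕ → Set ℝ) (c : ℕ → ℂ),
    (∀ k, MeasurableSet (B k)) ∧ Pairwise (Function.onFun Disjoint B) ∧ (⋃ k, B k) = univ ∧
    ∀ k, ∀ t ∈ B k, ‖Complex.exp (Complex.I * ((r * t : ℝ) : ℂ)) - c k‖ ≤ ε := by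
  let f : ℝ → ℕ := fun t => Encodable.encode ⌊r * t / ε⌋
  have hf : Measurable f := by
    have h1 : Measurable (fun t : ℝ => ⌊r * t / ε⌋) :=
      Int.measurable_floor.comp (by fun_prop)
    exact (measurable_from_top (f := (Encodable.encode : ℤ → ℕ))).comp h1
  have key : ∀ k, ∃ c : ℂ, ∀ t ∈ f ⁻¹' {k},
      ‖Complex.exp (Complex.I * ((r * t : ℝ) : ℂ)) - c‖ ≤ ε := by
    intro k
    by_cases h : (f ⁻¹' {k}).Nonempty
    · obtain ⟨s, hs⟩ := h
      refine ⟨Complex.exp (Complex.I * ((r * s : ℝ) : ℂ)), fun t ht => ?_⟩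
      refine (norm_exp_sub _ _).trans ?_
      have h1 : ⌊r * t / ε⌋ = ⌊r * s / ε⌋ :=
        Encodable.encode_injective ((ht : f t = k).trans (hs : f s = k).symm)
      have h2 := Int.abs_sub_lt_one_of_floor_eq_floor h1
      rw [← sub_div, abs_div, abs_of_pos hε, div_lt_one hε] at h2
      exact h2.le
    · exact ⟨0, fun t ht => (h ⟨t, ht⟩).elim⟩
  choose c hc using key
  refine ⟨fun k => f ⁻¹' {k}, c, fun k => hf (measurableSet_singleton k), ?_, ?_, hc⟩
  · intro i j hij
    exact Disjoint.preimage f (by simpa using hij)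
  · ext t; simp

/-- Abstract multiplicativity: if `χ` looks like `e^{irt} φ` for `τ`, and `M ≤ C τ`, then
`∫ e^{irt} d⟨φ, M φ⟩ = ⟨φ, χ⟩`. -/
lemma charFun_eq (τ M : POVM ℝ H) (C : ℝ)
    (hM : ∀ B, MeasurableSet B → ∀ x, (⟪x, M.toFun B x⟫).re ≤ C * (⟪x, τ.toFun B x⟫).re)
    (φ ξ : H) (r : ℝ)
    (hξ : ∀ B, MeasurableSet B → ∀ (c : ℂ) (ε : ℝ), 0 < ε →
      (∀ t ∈ B, ‖Complex.exp (Complex.I * ((r * t : ℝ) : ℂ)) - c‖ ≤ ε) →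
      (⟪ξ - c • φ, τ.toFun B (ξ - c • φ)⟫).re ≤ ε ^ 2 * (⟪φ, τ.toFun B φ⟫).re)
    (hC : 0 ≤ C) :
    ∫ t, Complex.exp (Complex.I * ((r * t : ℝ) : ℂ)) ∂(M.meas φ) = ⟪φ, ξ⟫ := by
  have hint : Integrable (fun t : ℝ => Complex.exp (Complex.I * ((r * t : ℝ) : ℂ))) (M.meas φ) := by
    refine Integrable.of_bound (C := 1) (by fun_prop) (Filter.Eventually.of_forall fun t => ?_)
    rw [mul_comm, Complex.norm_exp_ofReal_mul_I]
  have main : ∀ ε : ℝ, 0 < ε →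
      ‖⟪φ, ξ⟫ - ∫ t, Complex.exp (Complex.I * ((r * t : ℝ) : ℂ)) ∂(M.meas φ)‖ ≤
        ε * ((3 / 2 + C / 2) * ‖φ‖ ^ 2) := by
    intro ε hε
    obtain ⟨B, c, hB, hd, hU, hc⟩ := exists_partition r ε hε
    have ha := M.m_iUnion B hB hd φ ξ
    have hb := hasSum_integral_iUnion (f := fun t : ℝ => Complex.exp (Complex.I * ((r * t : ℝ) : ℂ)))
      (μ := M.meas φ) hB hd hint.integrableOn
    have hm := (M.hasSum_re φ B hB hd).mul_left (3 / 2 * ε)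
    have ht := (τ.hasSum_re φ B hB hd).mul_left (C * ε / 2)
    have hs := hm.add ht
    rw [hU] at ha hb hs
    rw [M.normalized, τ.normalized] at hs
    rw [M.normalized] at ha
    simp only [one_apply_eq_self, setIntegral_univ] at ha hb hs
    have h := (ha.sub hb).norm_le_of_bounded hs (fun k => ?_)
    · refine h.trans (le_of_eq ?_)
      have : (⟪φ, φ⟫).re = ‖φ‖ ^ 2 := inner_self_eq_norm_sq (𝕜 := ℂ) φ
      rw [this]; ring
    · have e1 : ⟪φ, M.toFun (B k) ξ⟫ - ∫ t in B k, Complex.exp (Complex.I * ((r * t : ℝ) : ℂ))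
            ∂(M.meas φ)
          = ⟪φ, M.toFun (B k) (ξ - c k • φ)⟫ - ∫ t in B k,
            (Complex.exp (Complex.I * ((r * t : ℝ) : ℂ)) - c k) ∂(M.meas φ) := by
        rw [integral_sub hint.integrableOn (integrable_const _), setIntegral_const,
          meas_real _ _ (hB k), map_sub, map_smul, inner_sub_right, inner_smul_right,
          Complex.real_smul, M.inner_eq_re φ (hB k), Complex.ofReal_re]
        ring
      rw [e1]
      refine (norm_sub_le _ _).trans ?_
      have i1 := pos_cs (M.toFun (B k)) (M.isPositive _ (hB k)) φ (ξ - c k • φ) ε hε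
      have i2 := hM (B k) (hB k) (ξ - c k • φ)
      have i3 := hξ (B k) (hB k) (c k) ε hε (hc k)
      have i4 : ‖∫ t in B k,
            (Complex.exp (Complex.I * ((r * t : ℝ) : ℂ)) - c k) ∂(M.meas φ)‖
            ≤ ε * (M.meas φ).real (B k) :=
        norm_setIntegral_le_of_norm_le_const (measure_lt_top _ _) (hc k)
      rw [meas_real _ _ (hB k)] at i4
      have i5 : (⟪ξ - c k • φ, M.toFun (B k) (ξ - c k • φ)⟫).re
          ≤ C * (ε ^ 2 * (⟪φ, τ.toFun (B k) φ⟫).re) :=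
        i2.trans (mul_le_mul_of_nonneg_left i3 hC)
      have i6 : 1 / (2 * ε) * (⟪ξ - c k • φ, M.toFun (B k) (ξ - c k • φ)⟫).re
          ≤ 1 / (2 * ε) * (C * (ε ^ 2 * (⟪φ, τ.toFun (B k) φ⟫).re)) :=
        mul_le_mul_of_nonneg_left i5 (by positivity)
      have i7 : 1 / (2 * ε) * (C * (ε ^ 2 * (⟪φ, τ.toFun (B k) φ⟫).re))
          = C * ε / 2 * (⟪φ, τ.toFun (B k) φ⟫).re := by
        field_simp
      linarith
  have : ‖⟪φ, ξ⟫ - ∫ t, Complex.exp (Complex.I * ((r * t : ℝ) : ℂ)) ∂(M.meas φ)‖ ≤ 0 := by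
    have ht : Filter.Tendsto (fun ε : ℝ => ε * ((3 / 2 + C / 2) * ‖φ‖ ^ 2))
        (nhdsWithin 0 (Ioi 0)) (nhds 0) := by
      have : Filter.Tendsto (fun ε : ℝ => ε * ((3 / 2 + C / 2) * ‖φ‖ ^ 2))
        (nhds 0) (nhds (0 * ((3 / 2 + C / 2) * ‖φ‖ ^ 2))) := by
        apply Continuous.tendsto; fun_prop
      rw [zero_mul] at this
      exact this.mono_left nhdsWithin_le_nhds
    exact ge_of_tendsto ht (Filter.eventually_of_mem self_mem_nhdsWithin (fun ε hε => main ε hε))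
  exact (sub_eq_zero.mp (norm_le_zero_iff.mp this)).symm

/-- Abstract extremality. -/
lemma extreme_of (τ : POVM ℝ H) (S : Set H) (hS : Dense S)
    (hsh : ∀ φ ∈ S, ∀ r : ℝ, 0 ≤ r → ∃ ξ : H, ∀ B, MeasurableSet B → ∀ (c : ℂ) (ε : ℝ), 0 < ε →
      (∀ t ∈ B, ‖Complex.exp (Complex.I * ((r * t : ℝ) : ℂ)) - c‖ ≤ ε) →
      (⟪ξ - c • φ, τ.toFun B (ξ - c • φ)⟫).re ≤ ε ^ 2 * (⟪φ, τ.toFun B φ⟫).re)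
    (M₁ M₂ : POVM ℝ H) (t : ℝ) (h0 : 0 < t) (h1 : t < 1)
    (hτ : ∀ B : Set ℝ, MeasurableSet B →
        τ.toFun B = (t : ℂ) • M₁.toFun B + ((1 - t : ℝ) : ℂ) • M₂.toFun B)
    (B : Set ℝ) (hB : MeasurableSet B) :
    M₁.toFun B = τ.toFun B ∧ M₂.toFun B = τ.toFun B := by
  have hre : ∀ B, MeasurableSet B → ∀ x, (⟪x, τ.toFun B x⟫).re
      = t * (⟪x, M₁.toFun B x⟫).re + (1 - t) * (⟪x, M₂.toFun B x⟫).re := by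
    intro B hB x
    rw [hτ B hB]
    simp only [add_apply, smul_apply, inner_add_right,
      inner_smul_right, Complex.add_re, Complex.re_ofReal_mul]
  have hM1 : ∀ B, MeasurableSet B → ∀ x,
      (⟪x, M₁.toFun B x⟫).re ≤ t⁻¹ * (⟪x, τ.toFun B x⟫).re := by
    intro B hB x
    have := M₂.re_nonneg x hB
    rw [le_inv_mul_iff₀ h0, hre B hB x]
    nlinarith
  have hM2 : ∀ B, MeasurableSet B → ∀ x,
      (⟪x, M₂.toFun B x⟫).re ≤ (1 - t)⁻¹ * (⟪x, τ.toFun B x⟫).re := by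
    intro B hB x
    have := M₁.re_nonneg x hB
    rw [le_inv_mul_iff₀ (by linarith), hre B hB x]
    nlinarith
  have hmeas : ∀ φ ∈ S, M₁.meas φ = M₂.meas φ := by
    intro φ hφ
    apply Measure.ext_of_charFun
    have hpos : ∀ r : ℝ, 0 ≤ r → charFun (M₁.meas φ) r = charFun (M₂.meas φ) r := by
      intro r hr
      obtain ⟨ξ, hξ⟩ := hsh φ hφ r hr
      have e1 := charFun_eq τ M₁ t⁻¹ hM1 φ ξ r hξ (by positivity)
      have e2 := charFun_eq τ M₂ (1 - t)⁻¹ hM2 φ ξ r hξ (inv_nonneg.mpr (by linarith))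
      rw [charFun_apply_real, charFun_apply_real]
      have : ∀ x : ℝ, Complex.exp (r * x * Complex.I)
        = Complex.exp (Complex.I * ((r * x : ℝ) : ℂ)) := by
        intro x; push_cast; ring_nf
      simp only [this]
      rw [e1, e2]
    ext r
    rcases le_total 0 r with hr | hr
    · exact hpos r hr
    · have := hpos (-r) (by linarith)
      rw [charFun_neg, charFun_neg] at this
      exact star_injective this
  have hdiag : ∀ φ, ⟪(M₁.toFun B) φ, φ⟫ = ⟪(M₂.toFun B) φ, φ⟫ := by
    have : (fun φ => ⟪(M₁.toFun B) φ, φ⟫) = (fun φ => ⟪(M₂.toFun B) φ, φ⟫) := by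
      apply Continuous.ext_on hS (by fun_prop) (by fun_prop)
      intro φ hφ
      have h := hmeas φ hφ
      have h' : ⟪φ, M₁.toFun B φ⟫ = ⟪φ, M₂.toFun B φ⟫ := by
        rw [M₁.inner_eq_re φ hB, M₂.inner_eq_re φ hB, ← meas_real _ _ hB, ← meas_real _ _ hB, h]
      have h'' := congrArg (starRingEnd ℂ) h'
      simpa only [inner_conj_symm] using h''
    exact fun φ => congrFun this φ
  have heq : M₁.toFun B = M₂.toFun B := by
    have := (ext_inner_map (M₁.toFun B).toLinearMap (M₂.toFun B).toLinearMap).mp hdiag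
    exact ContinuousLinearMap.coe_injective this
  have h2 : τ.toFun B = M₂.toFun B := by
    rw [hτ B hB, heq, ← add_smul]
    push_cast
    simp
  exact ⟨heq.trans h2.symm, h2.symm⟩

end POVM

namespace TimeObs

/-- Energy shift in the momentum representation. -/
def shiftFun (b : ℝ) (h : ℝ → ℂ) (p : ℝ) : ℂ :=
  h (p * √(1 - b / p ^ 2)) * ((√(√(1 - b / p ^ 2)) : ℝ) : ℂ)⁻¹

lemma shiftFun_zero (h : ℝ → ℂ) : shiftFun 0 h = h := by
  funext p; simp [shiftFun]

lemma shiftFun_neg (b : ℝ) (h : ℝ → ℂ) (p : ℝ) :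
    shiftFun b h (-p) = shiftFun b (fun x => h (-x)) p := by
  simp [shiftFun]

lemma shiftFun_scale (b : ℝ) (h : ℝ → ℂ) (κ : ℝ) (hκ : κ ≠ 0) (p : ℝ) :
    shiftFun (b * κ ^ 2) h (p * κ) = shiftFun b (fun x => h (x * κ)) p := by
  have : b * κ ^ 2 / (p * κ) ^ 2 = b / p ^ 2 := by
    rw [mul_pow, mul_div_mul_right _ _ (pow_ne_zero 2 hκ)]
  simp only [shiftFun, this]
  congr 2; ring

lemma tendsto_aux (b : ℝ) (hb : 0 ≤ b) (p : ℝ) (hp : p ^ 2 ≤ b ∨ p = 0) :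
    Filter.Tendsto (fun p : ℝ => p * √(1 - b / p ^ 2)) (nhds p) (nhds 0) := by
  by_cases h0 : p = 0
  · subst h0
    refine squeeze_zero_norm (a := fun p : ℝ => |p|) (fun q => ?_) ?_
    · rw [norm_mul, Real.norm_eq_abs, Real.norm_of_nonneg (Real.sqrt_nonneg _)]
      have : √(1 - b / q ^ 2) ≤ 1 := by
        rw [Real.sqrt_le_one]
        have : 0 ≤ b / q ^ 2 := by positivity
        linarith
      exact mul_le_of_le_one_right (abs_nonneg _) this
    · simpa using (continuous_abs.tendsto (0 : ℝ))
  · have hp' : p ^ 2 ≤ b := hp.resolve_right h0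
    have hc : ContinuousAt (fun p : ℝ => p * √(1 - b / p ^ 2)) p := by
      have : p ^ 2 ≠ 0 := by positivity
      fun_prop (disch := assumption)
    have hv : √(1 - b / p ^ 2) = 0 := by
      apply Real.sqrt_eq_zero_of_nonpos
      have h2 : 0 < p ^ 2 := by positivity
      rw [sub_nonpos, one_le_div h2]; exact hp'
    have := hc.tendsto
    simp only [hv, mul_zero] at this
    exact this

lemma shiftFun_contDiff (b : ℝ) (hb : 0 ≤ b) (h : ℝ → ℂ) (hh : ContDiff ℝ (⊤ : ℕ∞) h)
    (h0 : h =ᶠ[nhds 0] 0) : ContDiff ℝ (⊤ : ℕ∞) (shiftFun b h) := by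
  rw [contDiff_iff_contDiffAt]
  intro p
  by_cases hp : p ^ 2 ≤ b ∨ p = 0
  · have : shiftFun b h =ᶠ[nhds p] fun _ => 0 := by
      filter_upwards [(tendsto_aux b hb p hp).eventually h0] with q hq
      simp only [shiftFun, hq, Pi.zero_apply, zero_mul]
    exact contDiffAt_const.congr_of_eventuallyEq this
  · push Not at hp
    obtain ⟨h1, h2⟩ := hp
    have h3 : 0 < p ^ 2 := by positivity
    have h4 : 0 < 1 - b / p ^ 2 := by
      rw [sub_pos, div_lt_one h3]; exact h1
    have c1 : ContDiffAt ℝ (⊤ : ℕ∞) (fun p : ℝ => 1 - b / p ^ 2) p :=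
      contDiffAt_const.sub (contDiffAt_const.div (contDiffAt_id.pow 2) h3.ne')
    have c2 : ContDiffAt ℝ (⊤ : ℕ∞) (fun p : ℝ => √(1 - b / p ^ 2)) p := c1.sqrt h4.ne'
    have h5 : 0 < √(1 - b / p ^ 2) := Real.sqrt_pos.mpr h4
    have c3 : ContDiffAt ℝ (⊤ : ℕ∞) (fun p : ℝ => √(√(1 - b / p ^ 2))) p := c2.sqrt h5.ne'
    have h6 : 0 < √(√(1 - b / p ^ 2)) := Real.sqrt_pos.mpr h5
    have c4 : ContDiffAt ℝ (⊤ : ℕ∞) (fun p : ℝ => ((√(√(1 - b / p ^ 2)) : ℝ) : ℂ)) p :=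
      Complex.ofRealCLM.contDiff.contDiffAt.comp p c3
    have c5 : ContDiffAt ℝ (⊤ : ℕ∞) (fun p : ℝ => h (p * √(1 - b / p ^ 2))) p :=
      hh.contDiffAt.comp p (contDiffAt_id.mul c2)
    exact c5.mul (c4.inv (by exact_mod_cast h6.ne'))

lemma shiftFun_hasCompactSupport (b : ℝ) (hb : 0 ≤ b) (h : ℝ → ℂ) (hc : HasCompactSupport h)
    (h0 : h =ᶠ[nhds 0] 0) : HasCompactSupport (shiftFun b h) := by
  obtain ⟨R, hR⟩ := hc.isCompact.isBounded.subset_closedBall 0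
  refine HasCompactSupport.intro (isCompact_closedBall (0 : ℝ) (√(R ^ 2 + b))) (fun p hp => ?_)
  by_contra hne
  have h1 : h (p * √(1 - b / p ^ 2)) ≠ 0 := fun h => hne (by simp [shiftFun, h])
  have h2 : p * √(1 - b / p ^ 2) ≠ 0 := fun h' => h1 (by rw [h']; exact h0.eq_of_nhds)
  have hp0 : p ≠ 0 := left_ne_zero_of_mul h2
  have hw : 0 < √(1 - b / p ^ 2) := lt_of_le_of_ne (Real.sqrt_nonneg _) (right_ne_zero_of_mul h2).symm
  have h3 := hR (subset_tsupport _ h1)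
  rw [mem_closedBall_zero_iff, Real.norm_eq_abs] at h3
  have h4 : (p * √(1 - b / p ^ 2)) ^ 2 ≤ R ^ 2 := by
    rw [← sq_abs]; gcongr
  rw [mul_pow, Real.sq_sqrt (Real.sqrt_pos.mp hw).le] at h4
  have h5 : p ^ 2 * (1 - b / p ^ 2) = p ^ 2 - b := by field_simp
  apply hp
  rw [mem_closedBall_zero_iff, Real.norm_eq_abs]
  apply Real.abs_le_sqrt
  linarith

/-- The half-line amplitude. -/
def FT (m t : ℝ) (g : ℝ → ℂ) : ℂ :=
  ∫ p in Ioi (0 : ℝ), Complex.exp (Complex.I * t / (2 * m) * (p : ℂ) ^ 2) * g p * ((√p : ℝ) : ℂ)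

lemma FT_eq (m t a : ℝ) (ha : 0 ≤ a) (g : ℝ → ℂ) (g0 : g 0 = 0) :
    FT m t (shiftFun a g) = Complex.exp (Complex.I * t / (2 * m) * a) *
      ((2 : ℂ)⁻¹ * ∫ x : ℝ, Complex.exp (Complex.I * t / (2 * m) * (x : ℂ)) * g (√x) *
        ((√(√x) : ℝ) : ℂ)⁻¹) := by
  set G : ℝ → ℂ := fun x => Complex.exp (Complex.I * t / (2 * m) * (x : ℂ)) * g (√x) *
        ((√(√x) : ℝ) : ℂ)⁻¹ with hG
  have G0 : ∀ x ≤ 0, G x = 0 := by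
    intro x hx
    simp [hG, Real.sqrt_eq_zero_of_nonpos hx, g0]
  have e1 : FT m t (shiftFun a g) = ∫ p in Ioi (0 : ℝ),
      ((2 : ℝ) * p ^ ((2 : ℝ) - 1)) • (Complex.exp (Complex.I * t / (2 * m) * a) * (2 : ℂ)⁻¹ *
        G (p ^ (2 : ℝ) - a)) := by
    unfold FT
    refine setIntegral_congr_fun measurableSet_Ioi (fun p hp => ?_)
    have hp : 0 < p := hp
    have e2 : p ^ (2 : ℝ) = p ^ 2 := Real.rpow_two p
    have e3 : p ^ ((2 : ℝ) - 1) = p := by norm_num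
    simp only [e2, e3]
    by_cases hpa : p ^ 2 ≤ a
    · rw [G0 _ (by linarith)]
      have : √(1 - a / p ^ 2) = 0 := by
        apply Real.sqrt_eq_zero_of_nonpos
        rw [sub_nonpos, one_le_div (by positivity)]; exact hpa
      simp [shiftFun, this, g0]
    · push Not at hpa
      have w1 : √(1 - a / p ^ 2) = √(p ^ 2 - a) / p := by
        have : 1 - a / p ^ 2 = (p ^ 2 - a) / p ^ 2 := by field_simp
        rw [this, Real.sqrt_div (by linarith), Real.sqrt_sq hp.le]
      have w2 : √(√(1 - a / p ^ 2)) = √(√(p ^ 2 - a)) / √p := by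
        rw [w1, Real.sqrt_div (Real.sqrt_nonneg _)]
      have w3 : p * √(1 - a / p ^ 2) = √(p ^ 2 - a) := by rw [w1]; field_simp
      have w4 : (0 : ℝ) < √(√(p ^ 2 - a)) :=
        Real.sqrt_pos.mpr (Real.sqrt_pos.mpr (by linarith))
      have w5 : ((√(√(p ^ 2 - a)) : ℝ) : ℂ) ≠ 0 := by exact_mod_cast w4.ne'
      have w6 : ((√p : ℝ) : ℂ) * ((√p : ℝ) : ℂ) = (p : ℂ) := by
        exact_mod_cast Real.mul_self_sqrt hp.le
      have w7 : Complex.exp (Complex.I * t / (2 * m) * (p : ℂ) ^ 2) =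
          Complex.exp (Complex.I * t / (2 * m) * a) *
          Complex.exp (Complex.I * t / (2 * m) * ((p ^ 2 - a : ℝ) : ℂ)) := by
        rw [← Complex.exp_add]; congr 1; push_cast; ring
      simp only [shiftFun, w2, w3, hG]
      rw [w7, Complex.real_smul]
      push_cast
      rw [inv_div, ← w6]
      ring
  rw [e1, integral_comp_rpow_Ioi_of_pos
    (g := fun x => Complex.exp (Complex.I * t / (2 * m) * a) * (2 : ℂ)⁻¹ * G (x - a)) two_pos,
    setIntegral_eq_integral_of_forall_compl_eq_zero, integral_const_mul,
    integral_sub_right_eq_self G a, mul_assoc]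
  intro x hx
  rw [mem_Ioi, not_lt] at hx
  rw [G0 _ (by linarith), mul_zero]

lemma FT_shift (m t a : ℝ) (ha : 0 ≤ a) (g : ℝ → ℂ) (g0 : g 0 = 0) :
    FT m t (shiftFun a g) = Complex.exp (Complex.I * t / (2 * m) * a) * FT m t g := by
  have h := FT_eq m t 0 le_rfl g g0
  rw [shiftFun_zero, Complex.ofReal_zero, mul_zero, Complex.exp_zero, one_mul] at h
  rw [FT_eq m t a ha g g0, h]

lemma FT_integrable (m t : ℝ) (g : ℝ → ℂ) (hg : Continuous g) (hc : HasCompactSupport g) :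
    IntegrableOn (fun p : ℝ => Complex.exp (Complex.I * t / (2 * m) * (p : ℂ) ^ 2) * g p *
      ((√p : ℝ) : ℂ)) (Ioi 0) := by
  apply Integrable.integrableOn
  apply Continuous.integrable_of_hasCompactSupport (by fun_prop)
  exact (hc.mul_left).mul_right

lemma FT_sub_smul (m t : ℝ) (f g : ℝ → ℂ) (hf : Continuous f) (hfc : HasCompactSupport f)
    (hg : Continuous g) (hc : HasCompactSupport g) (c : ℂ) :
    FT m t (fun p => f p - c * g p) = FT m t f - c * FT m t g := by
  unfold FT
  rw [← integral_const_mul, ← integral_sub (FT_integrable m t f hf hfc)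
    ((FT_integrable m t g hg hc).const_mul c)]
  congr 1; funext p; ring

open FourierTransform in
lemma fourierT_fourier (h : 𝓢(ℝ, ℂ)) (p : ℝ) :
    fourierT (⇑(𝓕 h : 𝓢(ℝ, ℂ))) p = ((Real.sqrt (2 * Real.pi) : ℝ) : ℂ)⁻¹ * h (p * (2 * Real.pi)⁻¹) := by
  unfold fourierT
  congr 1
  have h1 : 𝓕⁻ (𝓕 h) = h := FourierTransform.fourierInv_fourier_eq h
  have h2 : (𝓕⁻ (𝓕 h)) (p * (2 * Real.pi)⁻¹) = h (p * (2 * Real.pi)⁻¹) := by rw [h1]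
  rw [← h2, SchwartzMap.fourierInv_coe, Real.fourierInv_eq']
  congr 1; funext x
  rw [smul_eq_mul]
  congr 2
  have hin : inner ℝ x (p * (2 * Real.pi)⁻¹) = p * (2 * Real.pi)⁻¹ * x := by simp
  rw [hin]
  push_cast
  have : (Real.pi : ℂ) ≠ 0 := by exact_mod_cast Real.pi_ne_zero
  field_simp

/-- The class of test functions. -/
def D : Submodule ℂ 𝓢(ℝ, ℂ) where
  carrier := {h | HasCompactSupport ⇑h ∧ ⇑h =ᶠ[nhds 0] 0}
  zero_mem' := ⟨HasCompactSupport.zero, Filter.EventuallyEq.rfl⟩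
  add_mem' := by
    rintro a b ⟨ha, ha'⟩ ⟨hb, hb'⟩
    refine ⟨ha.add hb, ?_⟩
    filter_upwards [ha', hb'] with x h1 h2
    simp [h1, h2]
  smul_mem' := by
    rintro c a ⟨ha, ha'⟩
    refine ⟨HasCompactSupport.smul_left (f := fun _ => c) ha, ?_⟩
    filter_upwards [ha'] with x h1
    simp [h1]

lemma exists_shift (h : 𝓢(ℝ, ℂ)) (hh : h ∈ D) (b : ℝ) (hb : 0 ≤ b) :
    ∃ k : 𝓢(ℝ, ℂ), k ∈ D ∧ ⇑k = shiftFun b h := by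
  have h1 := shiftFun_hasCompactSupport b hb h hh.1 hh.2
  have h2 := shiftFun_contDiff b hb h (h.smooth _) hh.2
  refine ⟨h1.toSchwartzMap h2, ⟨h1, ?_⟩, rfl⟩
  filter_upwards [(tendsto_aux b hb 0 (Or.inr rfl)).eventually hh.2] with q hq
  change shiftFun b h q = 0
  simp only [shiftFun, hq, Pi.zero_apply, zero_mul]

lemma dense_D : Dense ((D.map (SchwartzMap.toLpCLM ℂ ℂ 2 (volume : Measure ℝ)).toLinearMap :
    Submodule ℂ L2R) : Set L2R) := by
  rw [Submodule.dense_iff_topologicalClosure_eq_top, Submodule.topologicalClosure_eq_top_iff,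
    Submodule.eq_bot_iff]
  intro x hx
  rw [Submodule.mem_orthogonal] at hx
  have hloc : LocallyIntegrable (x : ℝ → ℂ) volume :=
    (Lp.memLp x).locallyIntegrable (by norm_num)
  have hz := IsOpen.ae_eq_zero_of_integral_contDiff_smul_eq_zero (U := ({0}ᶜ : Set ℝ))
    isOpen_compl_singleton (hloc.locallyIntegrableOn _) (f := (x : ℝ → ℂ)) (μ := volume) ?_
  · rw [Lp.eq_zero_iff_ae_eq_zero]
    have h0 : ∀ᵐ y : ℝ ∂volume, y ∈ ({0}ᶜ : Set ℝ) := by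
      exact compl_mem_ae_iff.mpr (measure_singleton 0)
    filter_upwards [hz, h0] with y h1 h2 using h1 h2
  · intro g hg hgc hgs
    have c1 : HasCompactSupport (fun y => (g y : ℂ)) := hgc.comp_left (g := Complex.ofReal) rfl
    have c2 : ContDiff ℝ (⊤ : ℕ∞) (fun y => (g y : ℂ)) := Complex.ofRealCLM.contDiff.comp hg
    have hk : c1.toSchwartzMap c2 ∈ D := by
      refine ⟨c1, ?_⟩
      have : (0 : ℝ) ∉ tsupport g := fun h => hgs h rfl
      rw [notMem_tsupport_iff_eventuallyEq] at this
      filter_upwards [this] with y hy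
      change (g y : ℂ) = 0
      simp [hy]
    have := hx _ (Submodule.mem_map_of_mem hk)
    rw [L2.inner_def] at this
    rw [← this]
    apply integral_congr_ae
    have hae := (c1.toSchwartzMap c2).coeFn_toLp 2 (volume : Measure ℝ)
    filter_upwards [hae] with y hy
    change _ = inner ℂ (((c1.toSchwartzMap c2).toLp 2 volume : L2R) y) (x y)
    rw [hy]
    change _ = inner ℂ (g y : ℂ) (x y)
    simp [mul_comm]

/-- The vector of `L²` with momentum representation `h`. -/
def Φ (h : 𝓢(ℝ, ℂ)) : L2R := (FourierTransform.fourier h).toLp 2 (volume : Measure ℝ)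

lemma Φ_eq (h : 𝓢(ℝ, ℂ)) : Φ h = Lp.fourierTransformₗᵢ ℝ ℂ (h.toLp 2 (volume : Measure ℝ)) :=
  (SchwartzMap.toLp_fourier_eq h).symm

lemma Φ_sub_smul (h k : 𝓢(ℝ, ℂ)) (c : ℂ) : Φ (k - c • h) = Φ k - c • Φ h := by
  have e : ∀ f : 𝓢(ℝ, ℂ), Φ f =
    Lp.fourierTransformₗᵢ ℝ ℂ (SchwartzMap.toLpCLM ℂ ℂ 2 (volume : Measure ℝ) f) := Φ_eq
  rw [e, e, e, map_sub, map_smul, map_sub, map_smul]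

lemma dense_Φ : Dense (Φ '' (D : Set 𝓢(ℝ, ℂ))) := by
  have h1 := (Lp.fourierTransformₗᵢ ℝ ℂ).surjective.denseRange.dense_image
    (Lp.fourierTransformₗᵢ ℝ ℂ).continuous dense_D
  convert h1 using 1
  ext x
  simp only [mem_image, Submodule.map_coe, exists_exists_and_eq_and]
  constructor
  · rintro ⟨h, hh, rfl⟩
    exact ⟨h, hh, (Φ_eq h).symm⟩
  · rintro ⟨h, hh, rfl⟩
    exact ⟨h, hh, Φ_eq h⟩

/-- Probability density in time (up to normalization). -/
def N (m : ℝ) (h : ℝ → ℂ) (t : ℝ) : ℝ :=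
  ‖FT m t (fun p => h (p * (2 * Real.pi)⁻¹))‖ ^ 2 + ‖FT m t (fun p => h (-p * (2 * Real.pi)⁻¹))‖ ^ 2

lemma N_nonneg (m : ℝ) (h : ℝ → ℂ) (t : ℝ) : 0 ≤ N m h t := by unfold N; positivity

lemma two_pi_inv_ne : (2 * Real.pi)⁻¹ ≠ 0 := by positivity

lemma cs_pos {h : ℝ → ℂ} (hc : HasCompactSupport h) :
    HasCompactSupport (fun p => h (p * (2 * Real.pi)⁻¹)) :=
  hc.comp_homeomorph (Homeomorph.mulRight₀ _ two_pi_inv_ne)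

lemma cs_neg {h : ℝ → ℂ} (hc : HasCompactSupport h) :
    HasCompactSupport (fun p => h (-p * (2 * Real.pi)⁻¹)) :=
  (cs_pos hc).comp_homeomorph (Homeomorph.neg ℝ)

lemma N_shift (m r : ℝ) (hm : 0 < m) (hr : 0 ≤ r) (h k : 𝓢(ℝ, ℂ)) (hh : h ∈ D) (hk : k ∈ D)
    (hkh : ⇑k = shiftFun (2 * m * r * (2 * Real.pi)⁻¹ ^ 2) h) (c : ℂ) (t : ℝ) :
    N m (⇑(k - c • h)) t
      = ‖Complex.exp (Complex.I * ((r * t : ℝ) : ℂ)) - c‖ ^ 2 * N m h t := by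
  have ha : 0 ≤ 2 * m * r := by positivity
  have hexp : Complex.exp (Complex.I * t / (2 * m) * ((2 * m * r : ℝ) : ℂ))
      = Complex.exp (Complex.I * ((r * t : ℝ) : ℂ)) := by
    congr 1
    have : (m : ℂ) ≠ 0 := by exact_mod_cast hm.ne'
    push_cast; field_simp
  have e1 : FT m t (fun p => (k - c • h) (p * (2 * Real.pi)⁻¹))
      = (Complex.exp (Complex.I * ((r * t : ℝ) : ℂ)) - c) *
        FT m t (fun p => h (p * (2 * Real.pi)⁻¹)) := by
    have := FT_sub_smul m t (fun p => k (p * (2 * Real.pi)⁻¹)) (fun p => h (p * (2 * Real.pi)⁻¹))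
      (k.continuous.comp (by fun_prop)) (cs_pos hk.1) (h.continuous.comp (by fun_prop))
      (cs_pos hh.1) c
    have e2 : (fun p => k (p * (2 * Real.pi)⁻¹))
        = shiftFun (2 * m * r) (fun p => h (p * (2 * Real.pi)⁻¹)) := by
      funext p
      rw [hkh, shiftFun_scale _ _ _ two_pi_inv_ne]
    simp only [sub_apply, smul_apply, smul_eq_mul]
    rw [this, e2, FT_shift m t _ ha _ (by simpa using hh.2.eq_of_nhds), hexp]
    ring
  have e1' : FT m t (fun p => (k - c • h) (-p * (2 * Real.pi)⁻¹))
      = (Complex.exp (Complex.I * ((r * t : ℝ) : ℂ)) - c) *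
        FT m t (fun p => h (-p * (2 * Real.pi)⁻¹)) := by
    have := FT_sub_smul m t (fun p => k (-p * (2 * Real.pi)⁻¹)) (fun p => h (-p * (2 * Real.pi)⁻¹))
      (k.continuous.comp (by fun_prop)) (cs_neg hk.1) (h.continuous.comp (by fun_prop))
      (cs_neg hh.1) c
    have e2 : (fun p => k (-p * (2 * Real.pi)⁻¹))
        = shiftFun (2 * m * r) (fun p => h (-p * (2 * Real.pi)⁻¹)) := by
      funext p
      rw [hkh, shiftFun_scale _ _ _ two_pi_inv_ne, shiftFun_neg]
    simp only [sub_apply, smul_apply, smul_eq_mul]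
    rw [this, e2, FT_shift m t _ ha _ (by simpa using hh.2.eq_of_nhds), hexp]
    ring
  unfold N
  rw [e1, e1', norm_mul, norm_mul]
  ring

lemma inner_integral (m t : ℝ) (h : 𝓢(ℝ, ℂ)) (hh : h ∈ D) :
    (∫ p₁ in Ioi (0 : ℝ), ∫ p₂ in Ioi (0 : ℝ),
      Complex.exp (Complex.I * t / (2 * m) * ((p₂ : ℂ) ^ 2 - (p₁ : ℂ) ^ 2)) *
        (conj (fourierT (⇑(FourierTransform.fourier h)) p₁) *
            fourierT (⇑(FourierTransform.fourier h)) p₂ +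
          conj (fourierT (⇑(FourierTransform.fourier h)) (-p₁)) *
            fourierT (⇑(FourierTransform.fourier h)) (-p₂)) *
        ((Real.sqrt (p₁ * p₂) : ℝ) : ℂ)) = (((2 * Real.pi)⁻¹ * N m h t : ℝ) : ℂ) := by
  set α : ℝ → ℂ := fun p => Complex.exp (Complex.I * t / (2 * m) * (p : ℂ) ^ 2) *
    h (p * (2 * Real.pi)⁻¹) * ((√p : ℝ) : ℂ) with hα
  set β : ℝ → ℂ := fun p => Complex.exp (Complex.I * t / (2 * m) * (p : ℂ) ^ 2) *
    h (-p * (2 * Real.pi)⁻¹) * ((√p : ℝ) : ℂ) with hβ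
  have iα : IntegrableOn α (Ioi 0) := FT_integrable m t (fun p => h (p * (2 * Real.pi)⁻¹))
    (h.continuous.comp (by fun_prop)) (cs_pos hh.1)
  have iβ : IntegrableOn β (Ioi 0) := FT_integrable m t (fun p => h (-p * (2 * Real.pi)⁻¹))
    (h.continuous.comp (by fun_prop)) (cs_neg hh.1)
  have Fα : ∫ p in Ioi (0 : ℝ), α p = FT m t (fun p => h (p * (2 * Real.pi)⁻¹)) := rfl
  have Fβ : ∫ p in Ioi (0 : ℝ), β p = FT m t (fun p => h (-p * (2 * Real.pi)⁻¹)) := rfl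
  have hsq : ((Real.sqrt (2 * Real.pi) : ℝ) : ℂ)⁻¹ * ((Real.sqrt (2 * Real.pi) : ℝ) : ℂ)⁻¹
      = (((2 * Real.pi)⁻¹ : ℝ) : ℂ) := by
    rw [← mul_inv, ← Complex.ofReal_mul, Real.mul_self_sqrt (by positivity), Complex.ofReal_inv]
  have step : ∀ p₁ ∈ Ioi (0 : ℝ), (∫ p₂ in Ioi (0 : ℝ),
      Complex.exp (Complex.I * t / (2 * m) * ((p₂ : ℂ) ^ 2 - (p₁ : ℂ) ^ 2)) *
        (conj (fourierT (⇑(FourierTransform.fourier h)) p₁) *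
            fourierT (⇑(FourierTransform.fourier h)) p₂ +
          conj (fourierT (⇑(FourierTransform.fourier h)) (-p₁)) *
            fourierT (⇑(FourierTransform.fourier h)) (-p₂)) *
        ((Real.sqrt (p₁ * p₂) : ℝ) : ℂ)) =
      (((2 * Real.pi)⁻¹ : ℝ) : ℂ) * (conj (α p₁) * (∫ p in Ioi (0 : ℝ), α p)
        + conj (β p₁) * (∫ p in Ioi (0 : ℝ), β p)) := by
    intro p₁ hp₁
    rw [← integral_const_mul, ← integral_const_mul,
      ← integral_add (iα.const_mul _) (iβ.const_mul _), ← integral_const_mul]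
    congr 1; funext p₂
    have hp : (0 : ℝ) ≤ p₁ := le_of_lt hp₁
    have hex : Complex.exp (Complex.I * t / (2 * m) * ((p₂ : ℂ) ^ 2 - (p₁ : ℂ) ^ 2))
        = conj (Complex.exp (Complex.I * t / (2 * m) * (p₁ : ℂ) ^ 2)) *
          Complex.exp (Complex.I * t / (2 * m) * (p₂ : ℂ) ^ 2) := by
      rw [← Complex.exp_conj, ← Complex.exp_add]
      congr 1
      simp only [map_mul, map_div₀, map_pow, Complex.conj_I, Complex.conj_ofReal, map_ofNat]
      ring
    rw [fourierT_fourier, fourierT_fourier, fourierT_fourier, fourierT_fourier, hex,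
      Real.sqrt_mul hp, ← hsq]
    simp only [hα, hβ, map_mul, map_inv₀, Complex.conj_ofReal, Complex.ofReal_mul]
    ring
  rw [setIntegral_congr_fun measurableSet_Ioi step, integral_const_mul, integral_add, 
    integral_mul_const, integral_mul_const, integral_conj, integral_conj, Fα, Fβ,
    Complex.conj_mul', Complex.conj_mul']
  · unfold N; push_cast; rfl
  · exact (Complex.conjLIE.toContinuousLinearEquiv.toContinuousLinearMap.integrable_comp iα).mul_const _
  · exact (Complex.conjLIE.toContinuousLinearEquiv.toContinuousLinearMap.integrable_comp iβ).mul_const _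

end TimeObs

theorem stmt14 (m : ℝ) (hm : 0 < m)
    (τ : POVM ℝ L2R)
    -- τ is the canonical time observable of a free particle of mass m
    (hτ : ∀ φ ψ : 𝓢(ℝ, ℂ),
      ∀ (hφ : MemLp (⇑φ) 2 (volume : Measure ℝ)) (hψ : MemLp (⇑ψ) 2 (volume : Measure ℝ)),
      ∀ B : Set ℝ, MeasurableSet B →
        ⟪hφ.toLp ⇑φ, τ.toFun B (hψ.toLp ⇑ψ)⟫
          = (1 / (2 * Real.pi * m) : ℂ) *
            ∫ t in B, ∫ p₁ in Ioi (0 : ℝ), ∫ p₂ in Ioi (0 : ℝ),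
              Complex.exp (Complex.I * t / (2 * m) * ((p₂ : ℂ) ^ 2 - (p₁ : ℂ) ^ 2)) *
                (conj (fourierT (⇑φ) p₁) * fourierT (⇑ψ) p₂ +
                  conj (fourierT (⇑φ) (-p₁)) * fourierT (⇑ψ) (-p₂)) *
                ((Real.sqrt (p₁ * p₂) : ℝ) : ℂ)) :
    -- τ is an extreme point of the convex set of ALL POVMs on (ℝ, ℬ(ℝ)) acting on L²(ℝ)
    ∀ M₁ M₂ : POVM ℝ L2R, ∀ t : ℝ, 0 < t → t < 1 →
      (∀ B : Set ℝ, MeasurableSet B →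
        τ.toFun B = (t : ℂ) • M₁.toFun B + ((1 - t : ℝ) : ℂ) • M₂.toFun B) →
      ∀ B : Set ℝ, MeasurableSet B →
        M₁.toFun B = τ.toFun B ∧ M₂.toFun B = τ.toFun B := by
  have key : ∀ h : 𝓢(ℝ, ℂ), h ∈ TimeObs.D → ∀ B : Set ℝ, MeasurableSet B →
      (⟪TimeObs.Φ h, τ.toFun B (TimeObs.Φ h)⟫).re
        = 1 / (2 * Real.pi * m) * ((2 * Real.pi)⁻¹ * ∫ t in B, TimeObs.N m h t) := by
    intro h hh B hB
    have e := hτ (FourierTransform.fourier h) (FourierTransform.fourier h)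
      ((FourierTransform.fourier h).memLp 2 volume) ((FourierTransform.fourier h).memLp 2 volume)
      B hB
    simp only [TimeObs.inner_integral m _ h hh] at e
    rw [integral_complex_ofReal, integral_const_mul] at e
    have e' : ⟪TimeObs.Φ h, τ.toFun B (TimeObs.Φ h)⟫
        = ((1 / (2 * Real.pi * m) * ((2 * Real.pi)⁻¹ * ∫ t in B, TimeObs.N m h t) : ℝ) : ℂ) := by
      refine Eq.trans e ?_
      push_cast
      rfl
    rw [e', Complex.ofReal_re]
  refine fun M₁ M₂ t h0 h1 h B hB =>
    POVM.extreme_of τ (TimeObs.Φ '' TimeObs.D) TimeObs.dense_Φ ?_ M₁ M₂ t h0 h1 h B hB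
  rintro _ ⟨f, hf, rfl⟩ r hr
  by_cases hz : TimeObs.Φ f = 0
  · refine ⟨0, fun B hB c ε hε _ => ?_⟩
    simp [hz]
  have hint : Integrable (TimeObs.N m f) := by
    by_contra hni
    apply hz
    have e := key f hf univ MeasurableSet.univ
    rw [setIntegral_univ, integral_undef hni, mul_zero, mul_zero, τ.normalized,
      one_apply_eq_self] at e
    have : (⟪TimeObs.Φ f, TimeObs.Φ f⟫).re = ‖TimeObs.Φ f‖ ^ 2 :=
      inner_self_eq_norm_sq (𝕜 := ℂ) _
    rw [this] at e
    simpa using e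
  obtain ⟨k, hk, hkf⟩ := TimeObs.exists_shift f hf (2 * m * r * (2 * Real.pi)⁻¹ ^ 2) (by positivity)
  refine ⟨TimeObs.Φ k, fun B hB c ε hε hc => ?_⟩
  rw [← TimeObs.Φ_sub_smul, key _ (TimeObs.D.sub_mem hk (TimeObs.D.smul_mem c hf)) B hB,
    key _ hf B hB]
  have hmono : ∫ s in B, TimeObs.N m (⇑(k - c • f)) s ≤ ε ^ 2 * ∫ s in B, TimeObs.N m f s := by
    rw [← integral_const_mul]
    refine integral_mono_of_nonneg (Filter.Eventually.of_forall fun s => TimeObs.N_nonneg _ _ _)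
      (hint.integrableOn.const_mul _) ?_
    filter_upwards [ae_restrict_mem hB] with s hs
    rw [TimeObs.N_shift m r hm hr f k hf hk hkf c s]
    have := hc s hs
    have hN := TimeObs.N_nonneg m f s
    gcongr
  calc 1 / (2 * Real.pi * m) * ((2 * Real.pi)⁻¹ * ∫ s in B, TimeObs.N m (⇑(k - c • f)) s)
      ≤ 1 / (2 * Real.pi * m) * ((2 * Real.pi)⁻¹ * (ε ^ 2 * ∫ s in B, TimeObs.N m f s)) := by
        gcongr
    _ = _ := by ring

end
end

section
/- Fix m > 0 and let V(t) (t ∈ ℝ) be the free evolution on L²(ℝ): V(t) = 𝓕* ∘ (multiplication by p ↦ e^{itp²/(2m)}) ∘ 𝓕, where 𝓕 is the Fourier–Plancherel transform. Then there exists NO projection valued POVM P on (ℝ, ℬ(ℝ)) acting on L²(ℝ) satisfying the time covariance condition V(t) P(B) V(t)* = P(B + t) for all t ∈ ℝ and all Borel B ⊆ ℝ. -/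
open MeasureTheory Set
open scoped ComplexConjugate SchwartzMap

local notation "⟪" x ", " y "⟫" => @inner ℂ _ _ x y

noncomputable section

section HardyHelpers
open Complex Filter Topology

/-- The half-plane transform of an integrable function. -/
def halfF (g : ℝ → ℝ) (f : ℝ → ℂ) (z : ℂ) : ℂ :=
  ∫ q : ℝ, Complex.exp (Complex.I * z * (g q : ℂ)) * f q

theorem halfF_norm_exp_le {x : ℝ} (hx : 0 ≤ x) {z : ℂ} (hz : 0 ≤ z.im) :
    ‖Complex.exp (Complex.I * z * (x : ℂ))‖ ≤ 1 := by
  rw [Complex.norm_exp, Real.exp_le_one_iff]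
  simp
  positivity

theorem halfF_meas {g : ℝ → ℝ} (hg : Continuous g) {f : ℝ → ℂ} (hf : Integrable f) (z : ℂ) :
    AEStronglyMeasurable (fun q : ℝ => Complex.exp (Complex.I * z * (g q : ℂ)) * f q) volume := by
  have h : Continuous (fun q : ℝ => Complex.exp (Complex.I * z * (g q : ℂ))) := by fun_prop
  exact h.aestronglyMeasurable.mul hf.1

theorem halfF_norm_le {g : ℝ → ℝ} (hg0 : ∀ q, 0 ≤ g q) {f : ℝ → ℂ}
    (hf : Integrable f) {z : ℂ} (hz : 0 ≤ z.im) : ‖halfF g f z‖ ≤ ∫ q, ‖f q‖ := by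
  refine norm_integral_le_of_norm_le hf.norm (Eventually.of_forall fun q => ?_)
  rw [norm_mul]
  exact mul_le_of_le_one_left (norm_nonneg _) (halfF_norm_exp_le (hg0 q) hz)

theorem halfF_cont {g : ℝ → ℝ} (hg : Continuous g) (hg0 : ∀ q, 0 ≤ g q) {f : ℝ → ℂ}
    (hf : Integrable f) : ContinuousOn (halfF g f) {z : ℂ | 0 ≤ z.im} := by
  intro z hz
  refine tendsto_integral_filter_of_dominated_convergence (fun q => ‖f q‖) ?_ ?_ hf.norm ?_
  · exact Eventually.of_forall fun z => halfF_meas hg hf z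
  · filter_upwards [self_mem_nhdsWithin] with w hw
    refine Eventually.of_forall fun q => ?_
    rw [norm_mul]
    exact mul_le_of_le_one_left (norm_nonneg _) (halfF_norm_exp_le (hg0 q) hw)
  · refine Eventually.of_forall fun q => ?_
    have h : Continuous (fun z : ℂ => Complex.exp (Complex.I * z * (g q : ℂ)) * f q) := by fun_prop
    exact (h.tendsto z).mono_left nhdsWithin_le_nhds

theorem halfF_diff {g : ℝ → ℝ} (hg : Continuous g) (hg0 : ∀ q, 0 ≤ g q) {f : ℝ → ℂ}
    (hf : Integrable f) {z : ℂ} (hz : 0 < z.im) : DifferentiableAt ℂ (halfF g f) z := by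
  have hs : {w : ℂ | z.im / 2 < w.im} ∈ 𝓝 z :=
    (isOpen_lt continuous_const Complex.continuous_im).mem_nhds (by simp; linarith)
  refine (hasDerivAt_integral_of_dominated_loc_of_deriv_le
    (F := fun (w : ℂ) (q : ℝ) => Complex.exp (Complex.I * w * (g q : ℂ)) * f q)
    (F' := fun (w : ℂ) (q : ℝ) =>
      (Complex.I * (g q : ℂ)) * (Complex.exp (Complex.I * w * (g q : ℂ)) * f q))
    (bound := fun q => (2 / z.im) * ‖f q‖)
    hs ?_ ?_ ?_ ?_ ?_ ?_).2.differentiableAt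
  · exact Eventually.of_forall fun z => halfF_meas hg hf z
  · refine hf.norm.mono' (halfF_meas hg hf z) (Eventually.of_forall fun q => ?_)
    rw [norm_mul]
    exact mul_le_of_le_one_left (norm_nonneg _) (halfF_norm_exp_le (hg0 q) hz.le)
  · have h : Continuous (fun q : ℝ => Complex.I * (g q : ℂ)) := by fun_prop
    exact h.aestronglyMeasurable.mul (halfF_meas hg hf z)
  · refine Eventually.of_forall fun q w hw => ?_
    rw [norm_mul, norm_mul, norm_mul, ← mul_assoc]
    refine mul_le_mul_of_nonneg_right ?_ (norm_nonneg _)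
    have hw' : z.im / 2 < w.im := hw
    have e1 : ‖Complex.exp (Complex.I * w * (g q : ℂ))‖ = Real.exp (-(w.im * g q)) := by
      rw [Complex.norm_exp]; simp
    rw [e1, Complex.norm_I, Complex.norm_real, Real.norm_of_nonneg (hg0 q), one_mul]
    have h1 : z.im / 2 * g q ≤ w.im * g q := mul_le_mul_of_nonneg_right hw'.le (hg0 q)
    have h2 := Real.add_one_le_exp (w.im * g q)
    rw [Real.exp_neg, ← div_eq_mul_inv, div_le_div_iff₀ (Real.exp_pos _) hz]
    linarith
  · exact hf.norm.const_mul _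
  · refine Eventually.of_forall fun q w hw => ?_
    have h := ((((hasDerivAt_id w).const_mul Complex.I).mul_const (g q : ℂ)).cexp).mul_const (f q)
    refine h.congr_deriv ?_
    simp only [id, mul_one]
    ring

theorem halfF_zero_upper {g : ℝ → ℝ} (hg : Continuous g) (hg0 : ∀ q, 0 ≤ g q) {f : ℝ → ℂ}
    (hf : Integrable f) (h0 : ∀ t : ℝ, 0 ≤ t → halfF g f t = 0) {z : ℂ} (hz : 0 < z.im) :
    halfF g f z = 0 := by
  have himz : ∀ w : ℂ, (Complex.exp (w * I)).im = Real.exp (-w.im) * Real.sin w.re := by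
    intro w; rw [Complex.exp_im]; simp
  have him0 : ∀ w : ℂ, w.re ∈ Icc 0 Real.pi → 0 ≤ (Complex.exp (w * I)).im := by
    intro w hw
    rw [himz]
    exact mul_nonneg (Real.exp_pos _).le (Real.sin_nonneg_of_mem_Icc hw)
  have himp : ∀ w : ℂ, w.re ∈ Ioo 0 Real.pi → 0 < (Complex.exp (w * I)).im := by
    intro w hw
    rw [himz]
    exact mul_pos (Real.exp_pos _) (Real.sin_pos_of_mem_Ioo hw)
  have hz0 : z ≠ 0 := by rintro rfl; simp at hz
  set w : ℂ := -I * Complex.log z with hw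
  have hwz : Complex.exp (w * I) = z := by
    rw [hw, show -I * Complex.log z * I = Complex.log z by
      linear_combination (-Complex.log z) * I_mul_I, Complex.exp_log hz0]
  have hwre : w.re = Complex.arg z := by simp [hw, Complex.log_im]
  have harg : w.re ∈ Ioo 0 Real.pi := by
    rw [hwre]
    refine ⟨?_, ?_⟩
    · exact lt_of_le_of_ne (Complex.arg_nonneg_iff.2 hz.le) (fun h => by
        have := (Complex.arg_eq_zero_iff.1 h.symm).2; exact hz.ne' this)
    · exact lt_of_le_of_ne (Complex.arg_le_pi z) (fun h => by
        have := (Complex.arg_eq_pi_iff.1 h).2; exact hz.ne' this)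
  have key := Complex.HadamardThreeLines.norm_le_interp_of_mem_verticalClosedStrip'
    (f := fun w => halfF g f (Complex.exp (w * I))) (z := w) (a := 0) (b := ∫ q, ‖f q‖)
    Real.pi_pos (Ioo_subset_Icc_self harg) ?_ ?_ ?_ ?_
  · have hne : 1 - (w.re - 0) / (Real.pi - 0) ≠ 0 := by
      have : (w.re - 0) / (Real.pi - 0) < 1 := by
        rw [div_lt_one (by simpa using Real.pi_pos)]; simpa using harg.2
      linarith
    rw [Real.zero_rpow hne, zero_mul, hwz] at key
    exact norm_le_zero_iff.1 key
  · refine ⟨?_, ?_⟩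
    · intro u hu
      have h1 := halfF_diff hg hg0 hf (himp u hu)
      have h2 : DifferentiableAt ℂ (fun w : ℂ => Complex.exp (w * I)) u := by fun_prop
      exact (h1.comp u h2).differentiableWithinAt
    · have hcl : closure (Complex.HadamardThreeLines.verticalStrip 0 Real.pi)
          ⊆ Complex.HadamardThreeLines.verticalClosedStrip 0 Real.pi := by
        refine closure_minimal (fun u hu => Ioo_subset_Icc_self hu) ?_
        exact isClosed_Icc.preimage Complex.continuous_re
      refine ContinuousOn.comp (f := fun w : ℂ => Complex.exp (w * I))
        (t := {z : ℂ | 0 ≤ z.im}) (halfF_cont hg hg0 hf) ?_ ?_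
      · fun_prop
      · intro u hu; exact him0 u (hcl hu)
  · refine ⟨∫ q, ‖f q‖, ?_⟩
    rintro _ ⟨u, hu, rfl⟩
    exact halfF_norm_le hg0 hf (him0 u hu)
  · intro u hu
    have hu' : u.re = 0 := hu
    have : Complex.exp (u * I) = ((Real.exp (-u.im) : ℝ) : ℂ) := by
      rw [Complex.ofReal_exp]; congr 1
      apply Complex.ext <;> simp [hu']
    simp only [this]
    rw [h0 _ (Real.exp_pos _).le, norm_zero]
  · intro u hu
    have hu' : u.re = Real.pi := hu
    exact halfF_norm_le hg0 hf (him0 u (by rw [hu']; exact ⟨Real.pi_pos.le, le_rfl⟩))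

theorem halfF_zero {g : ℝ → ℝ} (hg : Continuous g) (hg0 : ∀ q, 0 ≤ g q) {f : ℝ → ℂ}
    (hf : Integrable f) (h0 : ∀ t : ℝ, 0 ≤ t → halfF g f t = 0) (t : ℝ) :
    halfF g f t = 0 := by
  have h1 : ContinuousWithinAt (halfF g f) {z : ℂ | 0 ≤ z.im} (t : ℂ) :=
    halfF_cont hg hg0 hf t (by simp)
  have h2 : Tendsto (fun n : ℕ => (t : ℂ) + ((1 / ((n : ℝ) + 1) : ℝ) : ℂ) * I) atTop
      (𝓝[{z : ℂ | 0 ≤ z.im}] (t : ℂ)) := by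
    refine tendsto_nhdsWithin_iff.2 ⟨?_, Eventually.of_forall fun n => ?_⟩
    · have h3 := (Complex.continuous_ofReal.tendsto 0).comp
        (tendsto_one_div_add_atTop_nhds_zero_nat (𝕜 := ℝ))
      simpa using (h3.mul_const I).const_add (t : ℂ)
    · have : (0:ℝ) ≤ 1 / ((n : ℝ) + 1) := by positivity
      show 0 ≤ (_ : ℂ).im
      simpa only [add_im, ofReal_im, mul_im, ofReal_re, I_im, I_re, mul_one, mul_zero, zero_mul,
        add_zero, zero_add] using this
  have h3 := h1.tendsto.comp h2
  refine tendsto_nhds_unique h3 ?_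
  refine tendsto_const_nhds.congr fun n => ?_
  refine (halfF_zero_upper hg hg0 hf h0 ?_).symm
  have : (0:ℝ) < 1 / ((n : ℝ) + 1) := by positivity
  simpa only [add_im, ofReal_im, mul_im, ofReal_re, I_im, I_re, mul_one, mul_zero, zero_mul,
    add_zero, zero_add] using this

end HardyHelpers

section SpectralHelpers
open scoped FourierTransform

/-- The phase function. -/
def phaseG (m : ℝ) (q : ℝ) : ℝ := (-2 * Real.pi * q) ^ 2 / (2 * m)

theorem fourierT_schwartz (φ : 𝓢(ℝ, ℂ)) (q : ℝ) :
    fourierT (⇑φ) (-2 * Real.pi * q)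
      = ((Real.sqrt (2 * Real.pi) : ℝ) : ℂ)⁻¹ * (𝓕 φ : 𝓢(ℝ, ℂ)) q := by
  rw [fourierT, SchwartzMap.fourier_coe, Real.fourier_real_eq_integral_exp_smul]
  congr 2
  ext x
  rw [smul_eq_mul]
  congr 2
  push_cast
  ring

theorem integral_fourierT (m t : ℝ) (φ ψ : 𝓢(ℝ, ℂ)) :
    ∫ p : ℝ, conj (fourierT (⇑φ) p) *
            Complex.exp (Complex.I * t * p ^ 2 / (2 * m)) * fourierT (⇑ψ) p
      = ∫ q : ℝ, Complex.exp (Complex.I * t * (phaseG m q : ℂ)) *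
          ⟪(𝓕 φ : 𝓢(ℝ, ℂ)) q, (𝓕 ψ : 𝓢(ℝ, ℂ)) q⟫ := by
  have h := Measure.integral_comp_mul_left (fun p : ℝ => conj (fourierT (⇑φ) p) *
            Complex.exp (Complex.I * t * p ^ 2 / (2 * m)) * fourierT (⇑ψ) p) (-2 * Real.pi)
  have hpi : (0 : ℝ) < 2 * Real.pi := by positivity
  have habs : |(-2 * Real.pi)⁻¹| = (2 * Real.pi)⁻¹ := by
    rw [abs_inv, show -2 * Real.pi = -(2 * Real.pi) by ring, abs_neg, abs_of_pos hpi]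
  rw [habs, eq_comm, inv_smul_eq_iff₀ hpi.ne'] at h
  rw [h, ← integral_smul]
  congr 1
  ext q
  rw [fourierT_schwartz, fourierT_schwartz]
  have hs : ((Real.sqrt (2 * Real.pi) : ℝ) : ℂ) * ((Real.sqrt (2 * Real.pi) : ℝ) : ℂ)
      = ((2 * Real.pi : ℝ) : ℂ) := by
    rw [← Complex.ofReal_mul, Real.mul_self_sqrt hpi.le]
  have hs0 : ((Real.sqrt (2 * Real.pi) : ℝ) : ℂ) ≠ 0 := by
    rw [Complex.ofReal_ne_zero]; positivity
  have he : Complex.I * t * ((-2 * Real.pi * q : ℝ) : ℂ) ^ 2 / (2 * m)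
      = Complex.I * t * (phaseG m q : ℂ) := by
    rw [phaseG]; push_cast; ring
  rw [he, Complex.real_smul, ← hs, map_mul, map_inv₀, Complex.conj_ofReal, RCLike.inner_apply]
  field_simp

theorem phaseG_cont (m : ℝ) : Continuous (phaseG m) := by
  unfold phaseG; fun_prop

theorem phaseG_nonneg {m : ℝ} (hm : 0 < m) (q : ℝ) : 0 ≤ phaseG m q := by
  unfold phaseG; positivity

theorem exp_memLp_top (m t : ℝ) :
    MemLp (fun q : ℝ => Complex.exp (Complex.I * t * (phaseG m q : ℂ))) ⊤ volume := by
  have hc := phaseG_cont m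
  have h : Continuous (fun q : ℝ => Complex.exp (Complex.I * t * (phaseG m q : ℂ))) := by fun_prop
  refine memLp_top_of_bound h.aestronglyMeasurable 1 (Filter.Eventually.of_forall fun q => ?_)
  rw [Complex.norm_exp]; simp

/-- Multiplication operator. -/
def multOp (m t : ℝ) : L2R →L[ℂ] L2R :=
  (ContinuousLinearMap.mul ℂ ℂ).holderL volume ⊤ 2 2 ((exp_memLp_top m t).toLp _)

theorem multOp_coe (m t : ℝ) (f : L2R) :
    multOp m t f =ᵐ[volume] fun q => Complex.exp (Complex.I * t * (phaseG m q : ℂ)) * f q := by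
  have h1 := (ContinuousLinearMap.mul ℂ ℂ).coeFn_holder (r := 2)
    ((exp_memLp_top m t).toLp _) f
  have h2 := (exp_memLp_top m t).coeFn_toLp
  refine h1.trans ?_
  filter_upwards [h2] with q hq
  rw [hq]; rfl

theorem inner_multOp (m t : ℝ) (f g : L2R) :
    ⟪f, multOp m t g⟫ = halfF (phaseG m) (fun q => ⟪f q, g q⟫) t := by
  rw [L2.inner_def, halfF]
  refine integral_congr_ae ?_
  filter_upwards [multOp_coe m t g] with q hq
  rw [hq, RCLike.inner_apply, RCLike.inner_apply]
  ring

theorem spectral (m : ℝ) (V : ℝ → (L2R ≃ₗᵢ[ℂ] L2R)) (hV : IsFreeEvolution m V) (t : ℝ)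
    (φ ψ : L2R) :
    ⟪φ, V t ψ⟫ = ⟪Lp.fourierTransformₗᵢ ℝ ℂ φ, multOp m t (Lp.fourierTransformₗᵢ ℝ ℂ ψ)⟫ := by
  have hd := SchwartzMap.denseRange_toLpCLM (E := ℝ) (F := ℂ) (p := 2) (μ := volume)
    ENNReal.ofNat_ne_top
  refine DenseRange.induction_on₂
    (p := fun φ ψ : L2R => ⟪φ, V t ψ⟫
      = ⟪Lp.fourierTransformₗᵢ ℝ ℂ φ, multOp m t (Lp.fourierTransformₗᵢ ℝ ℂ ψ)⟫)
    hd ?_ ?_ φ ψ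
  · have c1 := (V t).continuous
    have c2 := (Lp.fourierTransformₗᵢ ℝ ℂ).continuous
    have c3 := (multOp m t).continuous
    exact isClosed_eq (continuous_fst.inner (c1.comp continuous_snd))
      ((c2.comp continuous_fst).inner (c3.comp (c2.comp continuous_snd)))
  · intro φ ψ
    rw [SchwartzMap.toLpCLM_apply, SchwartzMap.toLpCLM_apply]
    have e1 : Lp.fourierTransformₗᵢ ℝ ℂ (φ.toLp 2) = (𝓕 φ : 𝓢(ℝ, ℂ)).toLp 2 :=
      SchwartzMap.toLp_fourier_eq φ
    have e2 : Lp.fourierTransformₗᵢ ℝ ℂ (ψ.toLp 2) = (𝓕 ψ : 𝓢(ℝ, ℂ)).toLp 2 :=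
      SchwartzMap.toLp_fourier_eq ψ
    rw [e1, e2, inner_multOp]
    refine (hV t φ ψ (φ.memLp 2) (ψ.memLp 2)).trans ?_
    rw [integral_fourierT, halfF]
    refine integral_congr_ae ?_
    filter_upwards [(𝓕 φ : 𝓢(ℝ, ℂ)).coeFn_toLp 2 volume, (𝓕 ψ : 𝓢(ℝ, ℂ)).coeFn_toLp 2 volume]
      with q h1 h2
    rw [h1, h2]

theorem spectral_zero (m : ℝ) (hm : 0 < m) (V : ℝ → (L2R ≃ₗᵢ[ℂ] L2R)) (hV : IsFreeEvolution m V)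
    (φ ψ : L2R) (h : ∀ t : ℝ, 0 ≤ t → ⟪φ, V t ψ⟫ = 0) (t : ℝ) : ⟪φ, V t ψ⟫ = 0 := by
  rw [spectral m V hV, inner_multOp]
  refine halfF_zero (phaseG_cont m) (phaseG_nonneg hm) (L2.integrable_inner _ _) ?_ t
  intro s hs
  rw [← inner_multOp, ← spectral m V hV]
  exact h s hs

theorem spectral_adj (m : ℝ) (V : ℝ → (L2R ≃ₗᵢ[ℂ] L2R)) (hV : IsFreeEvolution m V)
    (φ ψ : L2R) (t : ℝ) : ⟪V t φ, ψ⟫ = ⟪φ, V (-t) ψ⟫ := by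
  rw [← inner_conj_symm, spectral m V hV, spectral m V hV, inner_multOp, inner_multOp,
    halfF, halfF, ← integral_conj]
  congr 1
  ext q
  rw [map_mul, inner_conj_symm, ← Complex.exp_conj]
  congr 2
  simp

end SpectralHelpers

section PVMHelpers

variable {H : Type*} [NormedAddCommGroup H] [InnerProductSpace ℂ H] [CompleteSpace H]

theorem POVM.empty (P : POVM ℝ H) : P.toFun ∅ = 0 := by
  refine ContinuousLinearMap.ext fun ψ => ext_inner_left ℂ fun φ => ?_
  have h := (P.m_iUnion (fun _ => ∅) (fun _ => MeasurableSet.empty)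
    (fun _ _ _ => disjoint_bot_left) φ ψ).summable
  simpa using ((summable_const_iff _).1 h)

theorem POVM.union (P : POVM ℝ H) {A B : Set ℝ} (hA : MeasurableSet A) (hB : MeasurableSet B)
    (hd : Disjoint A B) (χ : H) : P.toFun (A ∪ B) χ = P.toFun A χ + P.toFun B χ := by
  refine ext_inner_left ℂ fun φ => ?_
  have h := P.m_iUnion (fun n => if n = 0 then A else if n = 1 then B else ∅) ?_ ?_ φ χ
  · have hU : (⋃ n : ℕ, (if n = 0 then A else if n = 1 then B else ∅)) = A ∪ B := by
      ext x
      simp only [mem_iUnion, mem_union]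
      constructor
      · rintro ⟨n, hn⟩
        split_ifs at hn with h1 h2
        · exact Or.inl hn
        · exact Or.inr hn
        · exact absurd hn (notMem_empty x)
      · rintro (hx | hx)
        · exact ⟨0, by simpa using hx⟩
        · exact ⟨1, by simpa using hx⟩
    rw [hU] at h
    have h2 := hasSum_sum_of_ne_finset_zero (L := SummationFilter.unconditional ℕ)
      (f := fun n : ℕ => ⟪φ, P.toFun (if n = 0 then A else if n = 1 then B else ∅) χ⟫)
      (s := Finset.range 2) (by
        intro n hn
        have : 2 ≤ n := by simpa [Nat.succ_le_iff] using hn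
        have h0 : n ≠ 0 := by omega
        have h1 : n ≠ 1 := by omega
        simp [h0, h1, P.empty])
    rw [h.unique h2, Finset.sum_range_succ, Finset.sum_range_one, inner_add_right]
    simp
  · intro n
    split_ifs
    exacts [hA, hB, MeasurableSet.empty]
  · intro i j hij
    simp only [Function.onFun]
    split_ifs <;> first | exact hd | exact hd.symm | omega | simp

/-- Projections of a subset with vanishing value vanish. -/
theorem POVM.zero_of_subset (P : POVM ℝ H)
    (hP : ∀ B : Set ℝ, MeasurableSet B →
          P.toFun B ∘L P.toFun B = P.toFun B ∧ IsSelfAdjoint (P.toFun B))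
    {A B : Set ℝ} (hA : MeasurableSet A) (hB : MeasurableSet B) (hAB : A ⊆ B) {χ : H}
    (h : P.toFun B χ = 0) : P.toFun A χ = 0 := by
  have hn : ∀ C : Set ℝ, MeasurableSet C → ⟪χ, P.toFun C χ⟫ = ((‖P.toFun C χ‖ ^ 2 : ℝ) : ℂ) := by
    intro C hC
    have h1 : P.toFun C (P.toFun C χ) = P.toFun C χ := by
      conv_rhs => rw [← (hP C hC).1]
      rfl
    have h2 := (hP C hC).2.isSymmetric χ (P.toFun C χ)
    rw [ContinuousLinearMap.coe_coe, h1] at h2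
    rw [← h2, inner_self_eq_norm_sq_to_K]
    simp
  have hu := P.union hA (hB.diff hA) disjoint_sdiff_right χ
  rw [union_sdiff_cancel hAB, h] at hu
  have h3 : (0 : ℂ) = ⟪χ, P.toFun A χ⟫ + ⟪χ, P.toFun (B \ A) χ⟫ := by
    rw [← inner_add_right, ← hu, inner_zero_right]
  rw [hn A hA, hn _ (hB.diff hA)] at h3
  have h4 : (0 : ℝ) = ‖P.toFun A χ‖ ^ 2 + ‖P.toFun (B \ A) χ‖ ^ 2 := by exact_mod_cast h3
  have h5 : ‖P.toFun A χ‖ ^ 2 = 0 := by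
    nlinarith [sq_nonneg ‖P.toFun A χ‖, sq_nonneg ‖P.toFun (B \ A) χ‖]
  simpa using h5

theorem POVM.compl (P : POVM ℝ H) {A : Set ℝ} (hA : MeasurableSet A) (χ : H) :
    P.toFun A χ + P.toFun Aᶜ χ = χ := by
  rw [← P.union hA hA.compl disjoint_compl_right, union_compl_self, P.normalized]; rfl

theorem POVM.eq_zero_of_Ico (P : POVM ℝ H) {χ : H}
    (h : ∀ n : ℤ, P.toFun (Ico (n : ℝ) (n + 1)) χ = 0) : χ = 0 := by
  refine ext_inner_left ℂ fun φ => ?_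
  let e : ℕ ≃ ℤ := Equiv.intEquivNat.symm
  have hs := P.m_iUnion (fun k => Ico ((e k : ℤ) : ℝ) (e k + 1)) (fun _ => measurableSet_Ico)
    (fun i j hij => pairwise_disjoint_Ico_intCast ℝ (e.injective.ne hij)) φ χ
  have hU : (⋃ k : ℕ, Ico ((e k : ℤ) : ℝ) (e k + 1)) = univ := by
    rw [← iUnion_Ico_intCast ℝ]
    exact e.surjective.iUnion_comp (fun n : ℤ => Ico (n : ℝ) (n + 1))
  rw [hU, P.normalized] at hs
  simp only [h, inner_zero_right] at hs
  rw [inner_zero_right]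
  exact hs.unique hasSum_zero

end PVMHelpers

theorem nontrivial_L2R : ∃ χ : L2R, χ ≠ 0 := by
  refine ⟨indicatorConstLp 2 (measurableSet_Icc (a := (0:ℝ)) (b := 1)) (by simp) (1 : ℂ), ?_⟩
  intro h
  have := congrArg norm h
  rw [norm_indicatorConstLp (by simp) (by simp)] at this
  simp at this

theorem stmt15 (m : ℝ) (hm : 0 < m)
    (V : ℝ → (L2R ≃ₗᵢ[ℂ] L2R)) (hV : IsFreeEvolution m V) :
    -- there is no time-covariant projection valued POVM
    ¬ ∃ P : POVM ℝ L2R, TimeCovariant V P ∧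
        ∀ B : Set ℝ, MeasurableSet B →
          P.toFun B ∘L P.toFun B = P.toFun B ∧ IsSelfAdjoint (P.toFun B) := by
  rintro ⟨P, hcov, hP⟩
  have himg : ∀ t : ℝ, (fun s => s + t) '' Ici (0 : ℝ) = Ici t := by
    intro t; simp
  -- covariance as an intertwining relation
  have hint : ∀ (t : ℝ) (ψ : L2R), P.toFun (Ici t) (V t ψ) = V t (P.toFun (Ici 0) ψ) := by
    intro t ψ
    refine ext_inner_left ℂ fun φ => ?_
    have h := hcov t (Ici 0) measurableSet_Ici ((V t).symm φ) ψ
    rw [himg, LinearIsometryEquiv.apply_symm_apply] at h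
    rw [h, ← (V t).inner_map_map, LinearIsometryEquiv.apply_symm_apply]
  -- vectors fixed by a smaller set are fixed by a larger one
  have hmono : ∀ (A B : Set ℝ), MeasurableSet A → MeasurableSet B → A ⊆ B → ∀ χ : L2R,
      P.toFun A χ = χ → P.toFun B χ = χ := by
    intro A B hA hB hAB χ h
    have h1 := P.compl hA χ
    rw [h, add_eq_left] at h1
    have h2 := P.zero_of_subset hP hB.compl hA.compl (compl_subset_compl.2 hAB) h1
    have h3 := P.compl hB χ
    rwa [h2, add_zero] at h3
  -- orthogonality for all times
  have horth : ∀ φ ψ : L2R, P.toFun (Ici 0) φ = 0 → P.toFun (Ici 0) ψ = ψ →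
      ∀ t, ⟪φ, V t ψ⟫ = 0 := by
    intro φ ψ hφ hψ
    refine spectral_zero m hm V hV φ ψ fun t ht => ?_
    have h1 := hint t ψ
    rw [hψ] at h1
    have h2 := hmono _ (Ici 0) measurableSet_Ici measurableSet_Ici (Ici_subset_Ici.2 ht) _ h1
    have h3 := (hP (Ici 0) measurableSet_Ici).2.isSymmetric φ (V t ψ)
    rw [ContinuousLinearMap.coe_coe, hφ, h2, inner_zero_left] at h3
    exact h3.symm
  have hidem : ∀ χ : L2R, P.toFun (Ici 0) (P.toFun (Ici 0) χ) = P.toFun (Ici 0) χ := by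
    intro χ
    conv_rhs => rw [← (hP (Ici 0) measurableSet_Ici).1]
    rfl
  have hcomp0 : ∀ χ : L2R, P.toFun (Ici 0) (χ - P.toFun (Ici 0) χ) = 0 := by
    intro χ; rw [map_sub, hidem, sub_self]
  -- invariance of the range under the inverse evolution
  have hinv : ∀ (t : ℝ) (χ : L2R), P.toFun (Ici 0) χ = χ →
      P.toFun (Ici 0) ((V t).symm χ) = (V t).symm χ := by
    intro t χ hχ
    set ψ := (V t).symm χ with hψ
    have h1 : ∀ φ : L2R, P.toFun (Ici 0) φ = 0 → ⟪φ, ψ⟫ = 0 := by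
      intro φ hφ
      rw [← (V t).inner_map_map, hψ, LinearIsometryEquiv.apply_symm_apply,
        spectral_adj m V hV]
      exact horth φ χ hφ hχ _
    have h2 := h1 _ (hcomp0 ψ)
    have h3 := (hP (Ici 0) measurableSet_Ici).2.isSymmetric (ψ - P.toFun (Ici 0) ψ) ψ
    rw [ContinuousLinearMap.coe_coe, hcomp0, inner_zero_left] at h3
    have h4 : ⟪ψ - P.toFun (Ici 0) ψ, ψ - P.toFun (Ici 0) ψ⟫ = 0 := by
      rw [inner_sub_right, h2, ← h3, sub_zero]
    exact (sub_eq_zero.1 (inner_self_eq_zero.1 h4)).symm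
  have hall : ∀ (t : ℝ) (χ : L2R), P.toFun (Ici 0) χ = χ → P.toFun (Ici t) χ = χ := by
    intro t χ hχ
    have h1 := hint t ((V t).symm χ)
    rwa [hinv t χ hχ, LinearIsometryEquiv.apply_symm_apply] at h1
  have hran : ∀ χ : L2R, P.toFun (Ici 0) χ = χ → χ = 0 := by
    intro χ hχ
    refine P.eq_zero_of_Ico fun n => ?_
    have h1 := P.compl (measurableSet_Ici (a := (n : ℝ) + 1)) χ
    rw [hall _ χ hχ, add_eq_left] at h1
    refine P.zero_of_subset hP measurableSet_Ico measurableSet_Ici.compl ?_ h1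
    intro x hx
    simpa using hx.2
  have hE : ∀ χ : L2R, P.toFun (Ici 0) χ = 0 := fun χ => hran _ (hidem χ)
  obtain ⟨χ, hχ⟩ := nontrivial_L2R
  refine hχ (P.eq_zero_of_Ico fun n => ?_)
  refine P.zero_of_subset hP measurableSet_Ico (measurableSet_Ici (a := (n : ℝ)))
    (fun x hx => hx.1) ?_
  have h1 := hint n ((V n).symm χ)
  rwa [hE, map_zero, LinearIsometryEquiv.apply_symm_apply] at h1

end
end
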